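/- Fix n ≥ 0. Let Φ₈(n) be the (2n+2)×(2n+2) matrix over k[X,Y] obtained from Φ₄(n)⁺ by multiplying its last column (index 2n+1) by z₂, where Φ₄(n)⁺ is the lower-triangular matrix with rows and columns indexed 0,…,2n+1 whose only nonzero entries are: (0,0) = z₃; (1,0) = −z₄, (1,1) = z₁z₄; for 1 ≤ j ≤ n: (2j, 2j−1) = −z₁z₃, (2j, 2j) = z₂z₃, and (2j+1, 2j−1) = z₁z₄, (2j+1, 2j) = −z₂z₄, (2j+1, 2j+1) = z₁z₄. Then there exists a (2n+2)×(2n+2) matrix Ψ with entries in k[X,Y] such that Φ₈(n)·Ψ = Ψ·Φ₈(n) = F·I₂ₙ₊₂. -/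

import Mathlib

/-- A sum over a range whose summand is supported on `i, i-1, i-2`. -/
lemma sum_three {R : Type*} [AddCommMonoid R] (N i : ℕ) (hi : i + 2 < N) (f : ℕ → R)
    (hf : ∀ l, l ≠ i → l ≠ i + 1 → l ≠ i + 2 → f l = 0) :
    ∑ l ∈ Finset.range N, f l = f i + (f (i + 1) + f (i + 2)) := by
  have hs : ({i, i + 1, i + 2} : Finset ℕ) ⊆ Finset.range N := by
    intro x hx
    simp only [Finset.mem_insert, Finset.mem_singleton] at hx
    simp only [Finset.mem_range]
    omega
  rw [← Finset.sum_subset hs]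
  · rw [Finset.sum_insert (by simp), Finset.sum_insert (by simp), Finset.sum_singleton]
  · intro x _ hx
    simp only [Finset.mem_insert, Finset.mem_singleton, not_or] at hx
    exact hf x hx.1 hx.2.1 hx.2.2

lemma sum_two {R : Type*} [AddCommMonoid R] (N i : ℕ) (hi : i + 1 < N) (f : ℕ → R)
    (hf : ∀ l, l ≠ i → l ≠ i + 1 → f l = 0) :
    ∑ l ∈ Finset.range N, f l = f i + f (i + 1) := by
  have hs : ({i, i + 1} : Finset ℕ) ⊆ Finset.range N := by
    intro x hx
    simp only [Finset.mem_insert, Finset.mem_singleton] at hx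
    simp only [Finset.mem_range]
    omega
  rw [← Finset.sum_subset hs]
  · rw [Finset.sum_insert (by simp), Finset.sum_singleton]
  · intro x _ hx
    simp only [Finset.mem_insert, Finset.mem_singleton, not_or] at hx
    exact hf x hx.1 hx.2

/-- A one-sided factorization of a regular element with regular determinant is two-sided. -/
lemma mul_comm_of_mul_eq_smul {R m : Type*} [CommRing R] [IsDomain R] [Fintype m] [DecidableEq m]
    (A B : Matrix m m R) (F : R) (hF : F ≠ 0) (h : A * B = F • (1 : Matrix m m R)) :
    B * A = F • (1 : Matrix m m R) := by
  have hd : A.det ≠ 0 := by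
    intro h0
    have := congrArg Matrix.det h
    rw [Matrix.det_mul, h0, zero_mul, Matrix.det_smul, Matrix.det_one, mul_one] at this
    exact pow_ne_zero _ hF this.symm
  have h2 : A.det • B = F • A.adjugate := by
    have := congrArg (fun M => A.adjugate * M) h
    simpa [← Matrix.mul_assoc, Matrix.adjugate_mul] using this
  have h3 : A.det • (B * A) = A.det • (F • (1 : Matrix m m R)) := by
    rw [← Matrix.smul_mul, h2, Matrix.smul_mul, Matrix.adjugate_mul, smul_comm]
  ext i j
  have := congrFun (congrFun h3 i) j
  simp only [Matrix.smul_apply, smul_eq_mul] at this ⊢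
  exact mul_left_cancel₀ hd this

/-- The entries of `Φ₈(n)`. -/
def phiE {R : Type*} [CommRing R] (z1 z2 z3 z4 : R) (n i j : ℕ) : R :=
  (if j = 2 * n + 1 then z2 else 1) *
    (if i = 0 then (if j = 0 then z3 else 0)
      else if i = 1 then
        (if j = 0 then -z4 else if j = 1 then z1 * z4 else 0)
      else if i % 2 = 0 then
        (if j = i - 1 then -(z1 * z3)
         else if j = i then z2 * z3 else 0)
      else
        (if j = i - 2 then z1 * z4
         else if j = i - 1 then -(z2 * z4)
         else if j = i then z1 * z4 else 0))

/-- The entries of the matrix complementary to `Φ₈(n)`. -/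
def psiE {R : Type*} [CommRing R] (z1 z2 z3 z4 : R) (n i j : ℕ) : R :=
  if i % 2 = 0 then
    (if j = i then (if i = 0 then z1 * z2 * z4 else z1 * z4)
     else if j + 1 = i then z1 * z3
     else if j + 2 = i then z1 * z4 else 0)
  else
    (if i = 2 * n + 1 then 1 else z2) *
      (if j = i then z3 else if j + 1 = i then z4 else 0)

lemma phi_psi {R : Type*} [CommRing R] (z1 z2 z3 z4 : R) (n i j : ℕ) (hi : i < 2 * n + 2) :
    ∑ l ∈ Finset.range (2 * n + 2), phiE z1 z2 z3 z4 n i l * psiE z1 z2 z3 z4 n l j =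
      if i = j then z1 * z2 * z3 * z4 else 0 := by
  have hc : i = 0 ∨ i = 1 ∨ ∃ p, i = 2 * p + 2 ∨ i = 2 * p + 3 := by
    rcases i with _ | _ | i
    · simp
    · simp
    · right; right
      exact ⟨i / 2, by omega⟩
  rcases hc with rfl | rfl | ⟨p, rfl | rfl⟩
  · rw [sum_two _ 0 (by omega)]
    · simp only [phiE, psiE]
      split_ifs <;> first | (exfalso; omega) | ring
    · intro l h1 h2
      simp [phiE, h1]
  · rw [sum_two _ 0 (by omega)]
    · simp only [phiE, psiE]
      split_ifs <;> first | (exfalso; omega) | ring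
    · intro l h1 h2
      simp at h2
      simp [phiE, h1, h2]
  · rw [sum_two _ (2 * p + 1) (by omega)]
    · have e1 : (2 * p + 1) % 2 = 1 := by omega
      have e2 : (2 * p + 2) % 2 = 0 := by omega
      have e3 : 2 * p + 1 ≠ 2 * n + 1 := by omega
      have e4 : 2 * p + 2 ≠ 2 * n + 1 := by omega
      simp [phiE, psiE, e1, e2, e3, e4]
      split_ifs <;> first | (exfalso; omega) | ring
    · intro l h1 h2
      simp only [phiE]
      split_ifs <;> first | (exfalso; omega) | ring
  · rw [sum_three _ (2 * p + 1) (by omega)]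
    · have e1 : (2 * p + 1) % 2 = 1 := by omega
      have e2 : (2 * p + 2) % 2 = 0 := by omega
      have e5 : (2 * p + 3) % 2 = 1 := by omega
      have e3 : 2 * p + 1 ≠ 2 * n + 1 := by omega
      have e4 : 2 * p + 2 ≠ 2 * n + 1 := by omega
      simp [phiE, psiE, e1, e2, e3, e4, e5]
      split_ifs <;> first | (exfalso; omega) | ring
    · intro l h1 h2 h3
      simp only [phiE]
      split_ifs <;> first | (exfalso; omega) | ring

/-- For `n ≥ 0`, the matrix `Φ₈(n)`, obtained from `Φ₄(n)⁺` by multiplying the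
last column by `z₂`, is part of a matrix factorization of `F`. -/
theorem stmt_18 {k : Type*} [Field k] (lam : k) (h0 : lam ≠ 0) (h1 : lam ≠ 1)
    (z1 z2 z3 z4 F : MvPolynomial (Fin 2) k)
    (hz1 : z1 = MvPolynomial.X 1) (hz2 : z2 = MvPolynomial.X 0)
    (hz3 : z3 = MvPolynomial.X 0 - MvPolynomial.X 1)
    (hz4 : z4 = MvPolynomial.X 0 - MvPolynomial.C lam * MvPolynomial.X 1)
    (hF : F = z1 * z2 * z3 * z4)
    (n : ℕ)
    (Φ₄ Φ₈ : Matrix (Fin (2 * n + 2)) (Fin (2 * n + 2)) (MvPolynomial (Fin 2) k))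
    (hΦ₄ : ∀ i j : Fin (2 * n + 2), Φ₄ i j =
      if i.val = 0 then (if j.val = 0 then z3 else 0)
      else if i.val = 1 then
        (if j.val = 0 then -z4 else if j.val = 1 then z1 * z4 else 0)
      else if i.val % 2 = 0 then
        (if j.val = i.val - 1 then -(z1 * z3)
         else if j.val = i.val then z2 * z3 else 0)
      else
        (if j.val = i.val - 2 then z1 * z4
         else if j.val = i.val - 1 then -(z2 * z4)
         else if j.val = i.val then z1 * z4 else 0))
    (hΦ₈ : ∀ i j : Fin (2 * n + 2), Φ₈ i j =
      (if j.val = 2 * n + 1 then z2 else 1) * Φ₄ i j) :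
    ∃ Ψ : Matrix (Fin (2 * n + 2)) (Fin (2 * n + 2)) (MvPolynomial (Fin 2) k),
      Φ₈ * Ψ = F • (1 : Matrix (Fin (2 * n + 2)) (Fin (2 * n + 2)) (MvPolynomial (Fin 2) k)) ∧
      Ψ * Φ₈ = F • (1 : Matrix (Fin (2 * n + 2)) (Fin (2 * n + 2)) (MvPolynomial (Fin 2) k)) := by
  have hFne : F ≠ 0 := by
    have a1 : z1 ≠ 0 := by rw [hz1]; exact MvPolynomial.X_ne_zero _
    have a2 : z2 ≠ 0 := by rw [hz2]; exact MvPolynomial.X_ne_zero _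
    have a3 : z3 ≠ 0 := by
      intro h
      have := congrArg (MvPolynomial.eval (fun t : Fin 2 => if t = 0 then (1 : k) else 0)) h
      simp [hz3] at this
    have a4 : z4 ≠ 0 := by
      intro h
      have := congrArg (MvPolynomial.eval (fun t : Fin 2 => if t = 0 then (1 : k) else 0)) h
      simp [hz4] at this
    rw [hF]
    exact mul_ne_zero (mul_ne_zero (mul_ne_zero a1 a2) a3) a4
  have key : Φ₈ * (Matrix.of fun i j : Fin (2 * n + 2) => psiE z1 z2 z3 z4 n i.val j.val) =
      F • (1 : Matrix (Fin (2 * n + 2)) (Fin (2 * n + 2)) (MvPolynomial (Fin 2) k)) := by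
    ext1 i j
    have h := phi_psi z1 z2 z3 z4 n i.val j.val i.isLt
    rw [← Fin.sum_univ_eq_sum_range
      (fun l => phiE z1 z2 z3 z4 n i.val l * psiE z1 z2 z3 z4 n l j.val)] at h
    rw [Matrix.mul_apply, Matrix.smul_apply, Matrix.one_apply, smul_eq_mul, mul_ite, mul_one,
      mul_zero, hF]
    simp only [Fin.ext_iff]
    rw [← h]
    refine Finset.sum_congr rfl fun l _ => ?_
    rw [hΦ₈, hΦ₄]
    rfl
  exact ⟨_, key, mul_comm_of_mul_eq_smul _ _ _ hFne key⟩
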